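/- arXiv:math/0702178 — 5 statements merged into one kernel-verified Lean document; each statement's English description precedes it below -/
import Mathlib

section
/- Let X be a type, γ a finite subset of X, and f, g : X → ℝ. Then ∑_{η ⊆ γ} ( ∑_{x ∈ η} e^{f(x)} g(x) · ∏_{y ∈ η, y ≠ x} (e^{f(y)} − 1) ) = exp( ∑_{x ∈ γ} f(x) ) · ( ∑_{x ∈ γ} g(x) ), where the outer sum runs over all subsets η of γ. -/
/-- K-transform identity (Lemma 2.2 of the paper, on finite configurations):
`∑_{η ⊆ γ} ∑_{x ∈ η} e^{f(x)} g(x) ∏_{y ∈ η, y ≠ x} (e^{f(y)} - 1)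
  = e^{∑_{x ∈ γ} f(x)} · ∑_{x ∈ γ} g(x)`. -/
theorem K_transform_exp_linear {X : Type*} [DecidableEq X]
    (γ : Finset X) (f g : X → ℝ) :
    ∑ η ∈ γ.powerset,
        ∑ x ∈ η, Real.exp (f x) * g x * ∏ y ∈ η.erase x, (Real.exp (f y) - 1)
      = Real.exp (∑ x ∈ γ, f x) * ∑ x ∈ γ, g x := by
  induction γ using Finset.induction_on with
  | empty => simp
  | insert a s ha ih =>
    have hexp : ∑ t ∈ s.powerset, ∏ y ∈ t, (Real.exp (f y) - 1)
        = Real.exp (∑ x ∈ s, f x) := by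
      rw [← Finset.prod_add_one, Real.exp_sum]
      simp
    have hF : ∀ t ∈ s.powerset,
        ∑ x ∈ insert a t, Real.exp (f x) * g x *
            ∏ y ∈ (insert a t).erase x, (Real.exp (f y) - 1)
          = Real.exp (f a) * g a * ∏ y ∈ t, (Real.exp (f y) - 1)
            + (Real.exp (f a) - 1) *
              ∑ x ∈ t, Real.exp (f x) * g x * ∏ y ∈ t.erase x, (Real.exp (f y) - 1) := by
      intro t ht
      have hat : a ∉ t := fun h => ha (Finset.mem_powerset.mp ht h)
      rw [Finset.sum_insert hat, Finset.erase_insert hat, Finset.mul_sum]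
      congr 1
      refine Finset.sum_congr rfl fun x hx => ?_
      have hax : a ≠ x := fun h => hat (h ▸ hx)
      rw [Finset.erase_insert_of_ne hax,
        Finset.prod_insert (fun h => hat (Finset.mem_of_mem_erase h))]
      ring
    rw [Finset.sum_powerset_insert ha, Finset.sum_congr rfl hF, Finset.sum_add_distrib,
      ← Finset.mul_sum, ← Finset.mul_sum, hexp, ih, Finset.sum_insert ha,
      Finset.sum_insert ha, Real.exp_add]
    ring
end

section
/- Let X be a type, γ a finite subset of X, and f, g₁, g₂ : X → ℝ. Then ∑_{η ⊆ γ} ( ∑_{x₁ ∈ η} ∑_{x₂ ∈ η, x₂ ≠ x₁} e^{f(x₁)} g₁(x₁) · e^{f(x₂)} g₂(x₂) · ∏_{y ∈ η, y ∉ {x₁,x₂}} (e^{f(y)} − 1) ) = exp( ∑_{x ∈ γ} f(x) ) · ∑_{x₁ ∈ γ} ∑_{x₂ ∈ γ, x₂ ≠ x₁} g₁(x₁) g₂(x₂), where the outer sum runs over all subsets η of γ. -/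
theorem sum_powerset_sum_erase {X : Type*} [DecidableEq X] (γ : Finset X)
    (F : X → Finset X → ℝ) :
    ∑ η ∈ γ.powerset, ∑ x ∈ η, F x (η.erase x)
      = ∑ x ∈ γ, ∑ ζ ∈ (γ.erase x).powerset, F x ζ := by
  rw [Finset.sum_sigma', Finset.sum_sigma']
  refine Finset.sum_bij' (fun p _ => ⟨p.2, p.1.erase p.2⟩) (fun p _ => ⟨insert p.1 p.2, p.1⟩)
    ?_ ?_ ?_ ?_ ?_
  · rintro ⟨η, x⟩ h
    simp only [Finset.mem_sigma, Finset.mem_powerset] at h ⊢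
    exact ⟨h.1 h.2, Finset.erase_subset_erase _ h.1⟩
  · rintro ⟨x, ζ⟩ h
    simp only [Finset.mem_sigma, Finset.mem_powerset] at h ⊢
    exact ⟨Finset.insert_subset h.1 (h.2.trans (Finset.erase_subset _ _)),
      Finset.mem_insert_self _ _⟩
  · rintro ⟨η, x⟩ h
    simp only [Finset.mem_sigma, Finset.mem_powerset] at h
    simp [Finset.insert_erase h.2]
  · rintro ⟨x, ζ⟩ h
    simp only [Finset.mem_sigma, Finset.mem_powerset] at h
    have hx : x ∉ ζ := fun hx => Finset.notMem_erase x γ (h.2 hx)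
    simp [Finset.erase_insert hx]
  · rintro ⟨η, x⟩ h
    rfl

/-- K-transform identity (Lemma 2.2 of the paper, on finite configurations):
`∑_{η ⊆ γ} ∑_{x₁ ∈ η} ∑_{x₂ ∈ η, x₂ ≠ x₁} e^{f(x₁)} g₁(x₁) e^{f(x₂)} g₂(x₂)
    ∏_{y ∈ η, y ∉ {x₁,x₂}} (e^{f(y)} - 1)
  = e^{∑_{x ∈ γ} f(x)} · ∑_{x₁ ∈ γ} ∑_{x₂ ∈ γ, x₂ ≠ x₁} g₁(x₁) g₂(x₂)`. -/
theorem K_transform_exp_bilinear {X : Type*} [DecidableEq X]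
    (γ : Finset X) (f g₁ g₂ : X → ℝ) :
    ∑ η ∈ γ.powerset,
        ∑ x₁ ∈ η, ∑ x₂ ∈ η.erase x₁,
          Real.exp (f x₁) * g₁ x₁ * (Real.exp (f x₂) * g₂ x₂) *
            ∏ y ∈ (η.erase x₁).erase x₂, (Real.exp (f y) - 1)
      = Real.exp (∑ x ∈ γ, f x) * ∑ x₁ ∈ γ, ∑ x₂ ∈ γ.erase x₁, g₁ x₁ * g₂ x₂ := by
  rw [sum_powerset_sum_erase γ (fun x₁ ζ => ∑ x₂ ∈ ζ,
    Real.exp (f x₁) * g₁ x₁ * (Real.exp (f x₂) * g₂ x₂) *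
      ∏ y ∈ ζ.erase x₂, (Real.exp (f y) - 1)), Finset.mul_sum]
  refine Finset.sum_congr rfl fun x₁ h₁ => ?_
  rw [sum_powerset_sum_erase (γ.erase x₁) (fun x₂ ζ =>
    Real.exp (f x₁) * g₁ x₁ * (Real.exp (f x₂) * g₂ x₂) *
      ∏ y ∈ ζ, (Real.exp (f y) - 1)), Finset.mul_sum]
  refine Finset.sum_congr rfl fun x₂ h₂ => ?_
  rw [← Finset.mul_sum, ← Finset.prod_add_one, Real.exp_sum,
    ← Finset.mul_prod_erase γ _ h₁, ← Finset.mul_prod_erase (γ.erase x₁) _ h₂]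
  simp only [sub_add_cancel]
  ring
end

section
/- Let X be a type and let G₁, G₂ be real-valued functions on finite subsets of X. Define the ⋆-convolution by (G₁ ⋆ G₂)(ξ) := ∑ G₁(η₁ ∪ η₂) · G₂(η₂ ∪ η₃), the sum over all ordered triples (η₁, η₂, η₃) of pairwise disjoint subsets with η₁ ∪ η₂ ∪ η₃ = ξ. Then for every finite subset γ ⊆ X: ∑_{ξ ⊆ γ} (G₁ ⋆ G₂)(ξ) = ( ∑_{ξ ⊆ γ} G₁(ξ) ) · ( ∑_{ξ ⊆ γ} G₂(ξ) ); that is, K(G₁ ⋆ G₂) = (KG₁)·(KG₂) on finite configurations. -/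
/-- The K-transform turns the ⋆-convolution into a pointwise product:
`K(G₁ ⋆ G₂) = (KG₁) · (KG₂)` on finite configurations, where
`(G₁ ⋆ G₂)(ξ) = ∑_{(η₁,η₂,η₃)} G₁(η₁ ∪ η₂) G₂(η₂ ∪ η₃)`, the sum over all
ordered partitions of `ξ` into three (pairwise disjoint) parts.  Here the
ordered partitions of `ξ` are parametrized by `η₁ ⊆ ξ`, `η₂ ⊆ ξ \ η₁`, with
`η₃ = (ξ \ η₁) \ η₂`. -/
theorem K_transform_star_convolution {X : Type*} [DecidableEq X]
    (G₁ G₂ : Finset X → ℝ) (γ : Finset X) :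
    ∑ ξ ∈ γ.powerset, ∑ η₁ ∈ ξ.powerset, ∑ η₂ ∈ (ξ \ η₁).powerset,
        G₁ (η₁ ∪ η₂) * G₂ (η₂ ∪ ((ξ \ η₁) \ η₂))
      = (∑ ξ ∈ γ.powerset, G₁ ξ) * (∑ ξ ∈ γ.powerset, G₂ ξ) := by
  rw [Finset.sum_mul_sum, Finset.sum_sigma', Finset.sum_sigma', Finset.sum_sigma']
  refine Finset.sum_bij' (fun p _ => ⟨p.1.2 ∪ p.2, p.2 ∪ ((p.1.1 \ p.1.2) \ p.2)⟩)
    (fun q _ => ⟨⟨q.1 ∪ q.2, q.1 \ q.2⟩, q.1 ∩ q.2⟩) ?_ ?_ ?_ ?_ ?_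
  · rintro ⟨⟨ξ, a⟩, b⟩ h
    simp only [Finset.mem_sigma, Finset.mem_powerset, Finset.subset_iff] at h ⊢
    grind
  · rintro ⟨A, B⟩ h
    simp only [Finset.mem_sigma, Finset.mem_powerset, Finset.subset_iff] at h ⊢
    grind
  · rintro ⟨⟨ξ, a⟩, b⟩ h
    simp only [Finset.mem_sigma, Finset.mem_powerset, Finset.subset_iff] at h
    have h1 : a ∪ b ∪ (b ∪ ((ξ \ a) \ b)) = ξ := by ext x; grind
    have h2 : (a ∪ b) \ (b ∪ ((ξ \ a) \ b)) = a := by ext x; grind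
    have h3 : (a ∪ b) ∩ (b ∪ ((ξ \ a) \ b)) = b := by ext x; grind
    simp only [h1, h2, h3]
  · rintro ⟨A, B⟩ h
    have h1 : A \ B ∪ A ∩ B = A := by ext x; grind
    have h2 : A ∩ B ∪ (((A ∪ B) \ (A \ B)) \ (A ∩ B)) = B := by ext x; grind
    simp only [h1, h2]
  · rintro ⟨⟨ξ, a⟩, b⟩ h
    rfl
end

section
/- Let d ≥ 1, let S ⊂ ℤ^d be finite, and let Λ := ⋃_{r ∈ S} Q_r be the corresponding finite union of unit cubes. Let ζ ≥ 1, τ ≥ 0, σ ≥ 0, and 0 < p < 1. Define, for finite γ ⊂ ℝ^d, U(γ) := ζ^{|γ ∩ Λ|} · exp[ τ (1 + σ ∑_{r ∈ S} |γ_r|²)^p ]. Then for every finite subset η ⊂ ℝ^d: | ∑_{ξ ⊆ η} (−1)^{|η ∖ ξ|} U(ξ) | ≤ 𝟙[η ⊆ Λ] · (2ζ)^{|η|} · exp[ τ (1 + σ ∑_{r ∈ ℤ^d} |η_r|²)^p ]. -/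
set_option maxHeartbeats 2000000

open Classical in
/-- Lemma 5.1 of the paper: for `Λ` a finite union of unit cubes `Q_r`, `r ∈ S`,
and `U(γ) := ζ^{|γ ∩ Λ|} exp[τ (1 + σ ∑_{r ∈ S} |γ_r|²)^p]` (with `ζ ≥ 1`,
`τ, σ ≥ 0`, `0 < p < 1`), the inverse K-transform satisfies
`|(K⁻¹U)(η)| ≤ 𝟙[η ⊆ Λ] (2ζ)^{|η|} exp[τ (1 + σ ∑_{r ∈ ℤ^d} |η_r|²)^p]`. -/
theorem inverse_K_transform_estimate (d : ℕ) (hd : 1 ≤ d)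
    (S : Finset (Fin d → ℤ))
    (Q : (Fin d → ℤ) → Set (EuclideanSpace ℝ (Fin d)))
    (hQ : ∀ r, Q r = {x | ∀ i, (r i : ℝ) - 1 / 2 ≤ x i ∧ x i < (r i : ℝ) + 1 / 2})
    (Λ : Set (EuclideanSpace ℝ (Fin d))) (hΛ : Λ = ⋃ r ∈ S, Q r)
    (ζ τ σ p : ℝ) (hζ : 1 ≤ ζ) (hτ : 0 ≤ τ) (hσ : 0 ≤ σ)
    (hp0 : 0 < p) (hp1 : p < 1)
    (U : Finset (EuclideanSpace ℝ (Fin d)) → ℝ)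
    (hU : ∀ γ : Finset (EuclideanSpace ℝ (Fin d)),
      U γ = ζ ^ (γ.filter (· ∈ Λ)).card *
        Real.exp (τ * (1 + σ * ∑ r ∈ S, ((γ.filter (· ∈ Q r)).card : ℝ) ^ 2) ^ p)) :
    ∀ η : Finset (EuclideanSpace ℝ (Fin d)),
      |∑ ξ ∈ η.powerset, (-1 : ℝ) ^ (η \ ξ).card * U ξ| ≤
        (if (↑η : Set (EuclideanSpace ℝ (Fin d))) ⊆ Λ then (1 : ℝ) else 0) *
          (2 * ζ) ^ η.card *
          Real.exp (τ * (1 + σ *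
            ∑' r : Fin d → ℤ, ((η.filter (· ∈ Q r)).card : ℝ) ^ 2) ^ p) := by
  intro η
  have hζ0 : 0 ≤ ζ := zero_le_one.trans hζ
  have hdisj : ∀ r r' x, x ∈ Q r → x ∈ Q r' → r = r' := by
    intro r r' x h h'
    rw [hQ] at h h'
    funext i
    have h1 := h i
    have h2 := h' i
    have a : (r i : ℝ) < r' i + 1 := by linarith [h1.1, h2.2]
    have b : (r' i : ℝ) < r i + 1 := by linarith [h1.2, h2.1]
    have a' : r i < r' i + 1 := by exact_mod_cast a
    have b' : r' i < r i + 1 := by exact_mod_cast b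
    omega
  by_cases hη : (↑η : Set (EuclideanSpace ℝ (Fin d))) ⊆ Λ
  · rw [if_pos hη, one_mul]
    have hts : ∑' r : Fin d → ℤ, ((η.filter (· ∈ Q r)).card : ℝ) ^ 2
        = ∑ r ∈ S, ((η.filter (· ∈ Q r)).card : ℝ) ^ 2 := by
      apply tsum_eq_sum
      intro r hr
      have : η.filter (· ∈ Q r) = ∅ := by
        apply Finset.filter_eq_empty_iff.2
        intro x hx hxr
        have hxΛ := hη (Finset.mem_coe.2 hx)
        rw [hΛ] at hxΛ
        simp only [Set.mem_iUnion] at hxΛ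
        obtain ⟨r', hr', hx'⟩ := hxΛ
        exact hr (hdisj r r' x hxr hx' ▸ hr')
      rw [this]
      simp
    rw [hts]
    set E := Real.exp (τ * (1 + σ * ∑ r ∈ S, ((η.filter (· ∈ Q r)).card : ℝ) ^ 2) ^ p) with hE
    have hterm : ∀ ξ ∈ η.powerset, |(-1 : ℝ) ^ (η \ ξ).card * U ξ| ≤ ζ ^ η.card * E := by
      intro ξ hξ
      have hsub := Finset.mem_powerset.1 hξ
      have hUn : 0 ≤ U ξ := by
        rw [hU]
        exact mul_nonneg (pow_nonneg hζ0 _) (Real.exp_pos _).le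
      rw [abs_mul, abs_pow, abs_neg, abs_one, one_pow, one_mul, abs_of_nonneg hUn, hU, hE]
      have h1 : ζ ^ (ξ.filter (· ∈ Λ)).card ≤ ζ ^ η.card :=
        pow_le_pow_right₀ hζ
          (Finset.card_le_card ((Finset.filter_subset _ _).trans hsub))
      have h2 : ∑ r ∈ S, ((ξ.filter (· ∈ Q r)).card : ℝ) ^ 2
          ≤ ∑ r ∈ S, ((η.filter (· ∈ Q r)).card : ℝ) ^ 2 := by
        apply Finset.sum_le_sum
        intro r _
        have : (ξ.filter (· ∈ Q r)).card ≤ (η.filter (· ∈ Q r)).card :=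
          Finset.card_le_card (Finset.filter_subset_filter _ hsub)
        gcongr
      have h3 : (1 + σ * ∑ r ∈ S, ((ξ.filter (· ∈ Q r)).card : ℝ) ^ 2) ^ p
          ≤ (1 + σ * ∑ r ∈ S, ((η.filter (· ∈ Q r)).card : ℝ) ^ 2) ^ p := by
        apply Real.rpow_le_rpow
          (add_nonneg zero_le_one (mul_nonneg hσ (Finset.sum_nonneg fun _ _ => sq_nonneg _))) _ hp0.le
        linarith [mul_le_mul_of_nonneg_left h2 hσ]
      exact mul_le_mul h1 (Real.exp_le_exp.2 (mul_le_mul_of_nonneg_left h3 hτ))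
        (Real.exp_pos _).le (pow_nonneg hζ0 _)
    calc _ ≤ ∑ ξ ∈ η.powerset, |(-1 : ℝ) ^ (η \ ξ).card * U ξ| := Finset.abs_sum_le_sum_abs _ _
      _ ≤ ∑ ξ ∈ η.powerset, ζ ^ η.card * E := Finset.sum_le_sum hterm
      _ = (2 * ζ) ^ η.card * E := by
        rw [Finset.sum_const, Finset.card_powerset, nsmul_eq_mul, mul_pow]
        push_cast
        ring
  · rw [if_neg hη, zero_mul, zero_mul]
    obtain ⟨x, hx, hxΛ⟩ := Set.not_subset.1 hη
    have hxη : x ∈ η := Finset.mem_coe.1 hx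
    have hUx : ∀ ξ, U (insert x ξ) = U ξ := by
      intro ξ
      rw [hU, hU, Finset.filter_insert, if_neg hxΛ]
      congr 5
      apply congrArg
      apply Finset.sum_congr rfl
      intro r hr
      have : x ∉ Q r := by
        intro h
        apply hxΛ
        rw [hΛ]
        exact Set.mem_biUnion hr h
      rw [Finset.filter_insert, if_neg this]
    have hz : ∑ ξ ∈ η.powerset, (-1 : ℝ) ^ (η \ ξ).card * U ξ = 0 := by
      have hnx : x ∉ η.erase x := Finset.notMem_erase x η
      rw [← Finset.insert_erase hxη, Finset.sum_powerset_insert hnx, ← Finset.sum_add_distrib]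
      apply Finset.sum_eq_zero
      intro ξ hξ
      have hxξ : x ∉ ξ := fun h => hnx (Finset.mem_powerset.1 hξ h)
      have e1 : (insert x (η.erase x)) \ ξ = insert x (η.erase x \ ξ) :=
        Finset.insert_sdiff_of_notMem _ hxξ
      have e2 : (insert x (η.erase x)) \ (insert x ξ) = η.erase x \ ξ := by
        ext y
        simp only [Finset.mem_sdiff, Finset.mem_insert, Finset.mem_erase]
        tauto
      rw [hUx, e1, e2, Finset.card_insert_of_notMem (by simp), pow_succ]
      ring
    rw [hz, abs_zero]
end

section
/- Let d ≥ 1, let φ : ℝ^d → ℝ be measurable and bounded below (φ(x) ≥ m for all x, for some m ∈ ℝ), let Θ ⊂ ℝ^d be a bounded measurable set, and assume sup_{x ∈ Θᶜ} φ(x) ≤ M for some M ∈ ℝ. Then the function x ↦ e^{−φ(x)} − 1 is Lebesgue integrable on ℝ^d if and only if φ is Lebesgue integrable on the complement Θᶜ. -/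
open MeasureTheory

/-- For a measurable pair potential `φ` bounded below on `ℝ^d` and bounded
above outside a bounded set `Θ`, the integrability condition (I),
`∫ |e^{-φ(x)} - 1| dx < ∞`, is equivalent to `φ ∈ L¹(Θᶜ, dx)`. -/
theorem integrability_condition_iff (d : ℕ) (hd : 1 ≤ d)
    (φ : EuclideanSpace ℝ (Fin d) → ℝ) (hmeas : Measurable φ)
    (m : ℝ) (hm : ∀ x, m ≤ φ x)
    (Θ : Set (EuclideanSpace ℝ (Fin d)))
    (hΘbdd : Bornology.IsBounded Θ) (hΘmeas : MeasurableSet Θ)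
    (M : ℝ) (hM : ∀ x ∈ Θᶜ, φ x ≤ M) :
    Integrable (fun x => Real.exp (-φ x) - 1) ↔ IntegrableOn φ Θᶜ := by
  have key1 : ∀ t : ℝ, m ≤ t → |Real.exp (-t) - 1| ≤ (1 + Real.exp (-m)) * |t| := by
    intro t ht
    have h1 := Real.add_one_le_exp (-t)
    have h2 := Real.add_one_le_exp t
    have h3 : Real.exp (-t) * Real.exp t = 1 := by rw [← Real.exp_add]; simp
    have h4 : Real.exp (-t) ≤ Real.exp (-m) := Real.exp_le_exp.2 (by linarith)
    have h5 := Real.exp_pos (-t)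
    have h6 := mul_le_mul_of_nonneg_left h2 h5.le
    have h7 := mul_le_mul_of_nonneg_right h4 (abs_nonneg t)
    have h8 := mul_le_mul_of_nonneg_left (neg_abs_le t) h5.le
    have h9 := mul_nonneg (Real.exp_pos (-m)).le (abs_nonneg t)
    have h10 := le_abs_self t
    have h11 := abs_nonneg t
    rw [abs_le]
    constructor <;> nlinarith
  have key2 : ∀ t : ℝ, t ≤ M → |t| ≤ (1 + Real.exp M) * |Real.exp (-t) - 1| := by
    intro t ht
    have h1 := Real.add_one_le_exp (-t)
    have h2 := Real.add_one_le_exp t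
    have h3 : Real.exp t * Real.exp (-t) = 1 := by rw [← Real.exp_add]; simp
    have h4 : Real.exp t ≤ Real.exp M := Real.exp_le_exp.2 ht
    have h5 := Real.exp_pos t
    have h7 := mul_le_mul_of_nonneg_right h4 (abs_nonneg (Real.exp (-t) - 1))
    have h8 := mul_le_mul_of_nonneg_left (neg_abs_le (Real.exp (-t) - 1)) h5.le
    have h9 := mul_nonneg (Real.exp_pos M).le (abs_nonneg (Real.exp (-t) - 1))
    have h10 := le_abs_self (Real.exp (-t) - 1)
    have h11 := abs_nonneg (Real.exp (-t) - 1)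
    rw [abs_le]
    constructor <;> nlinarith
  have hmeas' : Measurable (fun x => Real.exp (-φ x) - 1) := by fun_prop
  constructor
  · intro h
    refine Integrable.mono' ((h.integrableOn (s := Θᶜ)).abs.const_mul (1 + Real.exp M))
      hmeas.aestronglyMeasurable ?_
    filter_upwards [ae_restrict_mem hΘmeas.compl] with x hx
    exact key2 _ (hM x hx)
  · intro h
    rw [← integrableOn_univ, ← Set.union_compl_self Θ]
    refine IntegrableOn.union ?_ ?_
    · refine Measure.integrableOn_of_bounded (M := 1 + Real.exp (-m))
        hΘbdd.measure_lt_top.ne hmeas'.aestronglyMeasurable ?_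
      refine Filter.Eventually.of_forall fun x => ?_
      have h4 : Real.exp (-φ x) ≤ Real.exp (-m) := Real.exp_le_exp.2 (by linarith [hm x])
      have h5 := Real.exp_pos (-φ x)
      rw [Real.norm_eq_abs, abs_le]
      constructor <;> linarith
    · refine Integrable.mono' (h.abs.const_mul (1 + Real.exp (-m)))
        hmeas'.aestronglyMeasurable ?_
      exact Filter.Eventually.of_forall fun x => key1 _ (hm x)
end
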